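/- Let G ~ N(0, σ²I_d) be a Gaussian vector in ℝ^d and f : ℝ^d → ℝ measurable. Suppose there is a measurable set A ⊂ ℝ^d with P(G ∈ A) ≥ 1 - ε such that the restriction of f to A is L-Lipschitz, and let M := E[f(G)⁴] < ∞. Then Var(f(G)) ≤ 2σ²L² + 10√(Mε). -/

import Mathlib

open MeasureTheory ProbabilityTheory

/-!
Fix `R > 0`. Truncating `f` at level `R` on `A` and extending from `A` by McShane gives a globally
`L`-Lipschitz `g` with `|g| ≤ R`. On `A` the error `f - g` vanishes unless `|f| > R`, and off `A` it
is at most `|f| + R`; charging both to the fourth moment gives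
`E (f - g)² ≤ M / (2 R²) + 4 R² P(Aᶜ)`. As `Var f ≤ 3/2 Var g + 3 E (f - g)²`, optimising over `R`
leaves `Var f ≤ 3/2 Var g + 6 √2 √(M P(Aᶜ))`.

The factor `3/2` leaves room for a Poincaré inequality `Var g ≤ (π²/8) σ² L²` with a non-optimal
constant, and for this one the rotation invariance of two independent copies `X`, `Y` of a standard
Gaussian suffices. A quarter turn along `X_θ = cos θ X + sin θ Y` carries `X` to `Y`; cutting it
into `n` equal steps, Cauchy–Schwarz and invariance bound `2 Var h = E (h Y - h X)²` by
`n² E (h X_{π/2n} - h X)²`, which tends to `(π/2)² E (Dh(X) Y)² ≤ (π/2)² Lip(h)²`. Every other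
Gaussian vector is a Lipschitz image of a standard one, which also covers `σ = 0`.
-/

open ContinuousLinearMap (rotation)
open Filter Topology
open scoped NNReal Real

section Truncation

/-- The truncation `T_R(t) = max (-R) (min t R)` of `t` at level `R`, meant for `0 ≤ R`. It makes a
function bounded without increasing its Lipschitz constant. -/
def truncate (R t : ℝ) : ℝ := max (-R) (min t R)

lemma lipschitzWith_truncate (R : ℝ) : LipschitzWith 1 (truncate R) :=
  (LipschitzWith.id.min_const R).const_max (-R)

variable {R : ℝ}

lemma abs_truncate_le (hR : 0 ≤ R) (t : ℝ) : |truncate R t| ≤ R :=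
  abs_le.2 ⟨le_max_left _ _, max_le (by linarith) (min_le_right _ _)⟩

lemma abs_sub_truncate_le (hR : 0 < R) (t : ℝ) : |t - truncate R t| ≤ t ^ 2 / (4 * R) := by
  rw [le_div_iff₀ (by positivity), truncate]
  rcases le_total t (-R) with hlow | hlow
  · rw [min_eq_left (by linarith), max_eq_left hlow, abs_of_nonpos (by linarith)]
    nlinarith [sq_nonneg (t + 2 * R)]
  rcases le_total t R with hup | hup
  · rw [min_eq_left hup, max_eq_right hlow, sub_self, abs_zero, zero_mul]
    positivity
  · rw [min_eq_right hup, max_eq_right (by linarith), abs_of_nonneg (by linarith)]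
    nlinarith [sq_nonneg (t - 2 * R)]

lemma sq_sub_truncate_le (hR : 0 < R) (t : ℝ) :
    (t - truncate R t) ^ 2 ≤ t ^ 4 / (2 * R ^ 2) :=
  calc (t - truncate R t) ^ 2 = |t - truncate R t| ^ 2 := (sq_abs _).symm
    _ ≤ (t ^ 2 / (4 * R)) ^ 2 := by gcongr; exact abs_sub_truncate_le hR t
    _ = t ^ 4 / (16 * R ^ 2) := by ring
    _ ≤ t ^ 4 / (2 * R ^ 2) := by gcongr; norm_num

lemma sq_sub_le_of_abs_le (hR : 0 < R) {s : ℝ} (hs : |s| ≤ R) (t : ℝ) :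
    (t - s) ^ 2 ≤ t ^ 4 / (2 * R ^ 2) + 4 * R ^ 2 := by
  have hsR : s ^ 2 ≤ R ^ 2 := sq_le_sq' (abs_le.1 hs).1 (abs_le.1 hs).2
  have hamgm : 2 * t ^ 2 ≤ t ^ 4 / (2 * R ^ 2) + 2 * R ^ 2 := by
    rw [div_add' _ _ _ (by positivity), le_div_iff₀ (by positivity)]
    nlinarith [sq_nonneg (t ^ 2 - 2 * R ^ 2)]
  calc (t - s) ^ 2 ≤ 2 * t ^ 2 + 2 * s ^ 2 := by nlinarith [sq_nonneg (t + s)]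
    _ ≤ t ^ 4 / (2 * R ^ 2) + 4 * R ^ 2 := by linarith

lemma exists_lipschitzWith_abs_le_eqOn_truncate {α : Type*} [PseudoMetricSpace α] {f : α → ℝ}
    {A : Set α} {K : ℝ≥0} (hf : LipschitzOnWith K f A) (hR : 0 ≤ R) :
    ∃ g : α → ℝ, LipschitzWith K g ∧ (∀ x, |g x| ≤ R) ∧ Set.EqOn g (truncate R ∘ f) A := by
  obtain ⟨g, hg, hfg⟩ := hf.extend_real
  refine ⟨truncate R ∘ g, ?_, fun x => abs_truncate_le hR (g x), fun x hx => ?_⟩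
  · simpa using (lipschitzWith_truncate R).comp hg
  · exact congrArg (truncate R) (hfg hx).symm

end Truncation

lemma le_two_mul_sqrt_mul_of_forall_le_div_add_mul {V a b : ℝ} (ha : 0 ≤ a) (hb : 0 ≤ b)
    (h : ∀ r > 0, V ≤ a / r + b * r) : V ≤ 2 * √(a * b) := by
  -- The optimal choice `r = √(a / b)` degenerates when `a` or `b` vanishes.
  have hpert : ∀ η > 0, V ≤ 2 * √((a + η) * (b + η)) := fun η hη => by
    have : 0 < √(a + η) := Real.sqrt_pos.2 (by linarith)
    have : 0 < √(b + η) := Real.sqrt_pos.2 (by linarith)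
    calc V ≤ a / (√(a + η) / √(b + η)) + b * (√(a + η) / √(b + η)) := h _ (by positivity)
      _ ≤ √(a + η) ^ 2 / (√(a + η) / √(b + η)) +
            √(b + η) ^ 2 * (√(a + η) / √(b + η)) := by
          rw [Real.sq_sqrt (by linarith), Real.sq_sqrt (by linarith)]
          gcongr <;> linarith
      _ = 2 * √((a + η) * (b + η)) := by
          rw [Real.sqrt_mul (by linarith)]
          field_simp
          ring
  have hlim : Tendsto (fun η => 2 * √((a + η) * (b + η))) (𝓝[>] 0) (𝓝 (2 * √(a * b))) :=
    tendsto_nhdsWithin_of_tendsto_nhds (Continuous.tendsto' (by fun_prop) _ _ (by simp))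
  exact ge_of_tendsto hlim (eventually_nhdsWithin_of_forall hpert)

section Variance

variable {Ω : Type*} [MeasurableSpace Ω] {μ : Measure Ω}

lemma variance_add_le [IsFiniteMeasure μ] {X Y : Ω → ℝ} (hX : MemLp X 2 μ) (hY : MemLp Y 2 μ)
    {t : ℝ} (ht : 0 < t) :
    Var[X + Y; μ] ≤ (1 + t) * Var[X; μ] + (1 + t⁻¹) * Var[Y; μ] := by
  have hsub : 0 ≤ t⁻¹ * Var[t • X - Y; μ] := by positivity [variance_nonneg (t • X - Y) μ]
  rw [variance_sub (hX.const_smul t) hY, variance_smul, covariance_smul_left] at hsub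
  have hexpand : t⁻¹ * (t ^ 2 * Var[X; μ] - 2 * (t * cov[X, Y; μ]) + Var[Y; μ]) =
      t * Var[X; μ] - 2 * cov[X, Y; μ] + t⁻¹ * Var[Y; μ] := by
    field_simp
  rw [variance_add hX hY]
  linarith

lemma variance_le_add_integral_sq_sub [IsProbabilityMeasure μ] {f g : Ω → ℝ} (hf : MemLp f 2 μ)
    (hg : MemLp g 2 μ) {t : ℝ} (ht : 0 < t) :
    Var[f; μ] ≤ (1 + t) * Var[g; μ] + (1 + t⁻¹) * ∫ x, (f x - g x) ^ 2 ∂μ :=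
  calc Var[f; μ] = Var[g + (f - g); μ] := by rw [add_sub_cancel]
    _ ≤ (1 + t) * Var[g; μ] + (1 + t⁻¹) * Var[f - g; μ] := variance_add_le hg (hf.sub hg) ht
    _ ≤ (1 + t) * Var[g; μ] + (1 + t⁻¹) * ∫ x, (f x - g x) ^ 2 ∂μ := by
      gcongr
      exact variance_le_expectation_sq (hf.sub hg).aestronglyMeasurable

lemma memLp_two_of_integrable_pow_four [IsFiniteMeasure μ] {f : Ω → ℝ}
    (hf : AEStronglyMeasurable f μ) (hf4 : Integrable (fun x => f x ^ 4) μ) : MemLp f 2 μ := by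
  have hf4' : MemLp f 4 μ := by
    rw [← integrable_norm_rpow_iff hf (by norm_num) (by norm_num)]
    simpa [← abs_pow] using hf4.norm
  exact hf4'.mono_exponent (by norm_num)

lemma integral_sq_sub_le_of_eqOn_truncate [IsFiniteMeasure μ] {f g : Ω → ℝ} {A : Set Ω} {R : ℝ}
    (hA : MeasurableSet A) (hR : 0 < R) (hgR : ∀ x, |g x| ≤ R)
    (hgA : Set.EqOn g (truncate R ∘ f) A) (hf : Integrable (fun x => f x ^ 4) μ) :
    ∫ x, (f x - g x) ^ 2 ∂μ ≤ (∫ x, f x ^ 4 ∂μ) / (2 * R ^ 2) + 4 * R ^ 2 * μ.real Aᶜ := by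
  have hind : Integrable (Aᶜ.indicator fun _ => 4 * R ^ 2) μ :=
    (integrable_const _).indicator hA.compl
  have hpointwise (x : Ω) :
      (f x - g x) ^ 2 ≤ f x ^ 4 / (2 * R ^ 2) + Aᶜ.indicator (fun _ => 4 * R ^ 2) x := by
    by_cases hx : x ∈ A
    · simpa [hx, hgA hx] using sq_sub_truncate_le hR (f x)
    · simpa [hx] using sq_sub_le_of_abs_le hR (hgR x) (f x)
  calc ∫ x, (f x - g x) ^ 2 ∂μ
      ≤ ∫ x, (f x ^ 4 / (2 * R ^ 2) + Aᶜ.indicator (fun _ => 4 * R ^ 2) x) ∂μ :=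
        integral_mono_of_nonneg (.of_forall fun x => sq_nonneg _) ((hf.div_const _).add hind)
          (.of_forall hpointwise)
    _ = (∫ x, f x ^ 4 ∂μ) / (2 * R ^ 2) + 4 * R ^ 2 * μ.real Aᶜ := by
        rw [integral_add (hf.div_const _) hind, integral_div,
          integral_indicator_const _ hA.compl, smul_eq_mul, mul_comm (μ.real Aᶜ)]

end Variance

section LipschitzPoincare

variable {α β : Type*} [PseudoMetricSpace α] [MeasurableSpace α] [PseudoMetricSpace β]
  [MeasurableSpace β] {μ : Measure α} {C : ℝ}

/-- The measure `μ` satisfies the Poincaré inequality `Var[h] ≤ C * K ^ 2` for `K`-Lipschitz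
functions `h`. Square integrability is part of the hypothesis because `Var[h; μ]` is the junk value
`0` without it. -/
def LipschitzPoincare (μ : Measure α) (C : ℝ) : Prop :=
  ∀ ⦃K : ℝ≥0⦄ ⦃h : α → ℝ⦄, LipschitzWith K h → MemLp h 2 μ → Var[h; μ] ≤ C * K ^ 2

lemma LipschitzPoincare.map [OpensMeasurableSpace α] [BorelSpace β] (hμ : LipschitzPoincare μ C)
    {L : ℝ≥0} {T : α → β} (hT : LipschitzWith L T) :
    LipschitzPoincare (μ.map T) (C * L ^ 2) := by
  intro K h hh hh2
  have hTm : AEMeasurable T μ := hT.continuous.measurable.aemeasurable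
  have hcomp : MemLp (h ∘ T) 2 μ := hh2.comp_of_map hTm
  rw [variance_map hh2.aemeasurable hTm]
  calc Var[h ∘ T; μ] ≤ C * ↑(K * L) ^ 2 := hμ (hh.comp hT) hcomp
    _ = C * L ^ 2 * K ^ 2 := by push_cast; ring

theorem LipschitzPoincare.variance_le_of_lipschitzOnWith [OpensMeasurableSpace α]
    [IsProbabilityMeasure μ] (hμ : LipschitzPoincare μ C) {f : α → ℝ} {K : ℝ≥0} {A : Set α}
    (hf : AEStronglyMeasurable f μ) (hf4 : Integrable (fun x => f x ^ 4) μ)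
    (hA : MeasurableSet A) (hfA : LipschitzOnWith K f A) :
    Var[f; μ] ≤ 3 / 2 * (C * K ^ 2) + 10 * √((∫ x, f x ^ 4 ∂μ) * μ.real Aᶜ) := by
  set M := ∫ x, f x ^ 4 ∂μ
  have : 0 ≤ M := integral_nonneg fun x => by positivity
  have hf2 : MemLp f 2 μ := memLp_two_of_integrable_pow_four hf hf4
  have htrunc : ∀ r > 0,
      Var[f; μ] - 3 / 2 * (C * K ^ 2) ≤ 3 / 2 * M / r + 12 * μ.real Aᶜ * r := fun r hr => by
    obtain ⟨g, hg, hgr, hgA⟩ :=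
      exists_lipschitzWith_abs_le_eqOn_truncate hfA (Real.sqrt_nonneg r)
    have hg2 : MemLp g 2 μ :=
      .of_bound hg.continuous.aestronglyMeasurable (√r) (.of_forall hgr)
    have hvar := variance_le_add_integral_sq_sub hf2 hg2 (t := 1 / 2) (by norm_num)
    have hpoincare : Var[g; μ] ≤ C * K ^ 2 := hμ hg hg2
    have hdist := integral_sq_sub_le_of_eqOn_truncate hA (Real.sqrt_pos.2 hr) hgr hgA hf4
    rw [Real.sq_sqrt hr.le] at hdist
    have hscale : 3 * (M / (2 * r)) = 3 / 2 * M / r := by field_simp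
    norm_num at hvar
    linarith
  have hopt := le_two_mul_sqrt_mul_of_forall_le_div_add_mul (by positivity) (by positivity) htrunc
  have hsqrt : √(3 / 2 * M * (12 * μ.real Aᶜ)) ≤ 5 * √(M * μ.real Aᶜ) := by
    rw [← Real.sqrt_sq (show (0 : ℝ) ≤ 5 by norm_num), ← Real.sqrt_mul (by norm_num)]
    refine Real.sqrt_le_sqrt ?_
    nlinarith [show 0 ≤ M * μ.real Aᶜ by positivity]
  linarith

theorem LipschitzPoincare.variance_le_of_lipschitzOnWith_comp [OpensMeasurableSpace α]
    [IsProbabilityMeasure μ] (hμ : LipschitzPoincare μ C) {Ω : Type*} [MeasurableSpace Ω]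
    {ν : Measure Ω} {X : α → Ω} (hX : MeasurePreserving X μ ν) {f : Ω → ℝ} {K : ℝ≥0} {A : Set Ω}
    (hf : AEStronglyMeasurable f ν) (hf4 : Integrable (fun x => f x ^ 4) ν)
    (hA : MeasurableSet A) (hfA : LipschitzOnWith K (f ∘ X) (X ⁻¹' A)) :
    Var[f; ν] ≤ 3 / 2 * (C * K ^ 2) + 10 * √((∫ x, f x ^ 4 ∂ν) * ν.real Aᶜ) := by
  rw [← hX.variance_fun_comp hf.aemeasurable, ← hX.map_eq,
    integral_map hX.aemeasurable (hX.map_eq ▸ hf4.aestronglyMeasurable), hX.map_eq,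
    ← hX.measureReal_preimage hA.compl.nullMeasurableSet, Set.preimage_compl]
  exact hμ.variance_le_of_lipschitzOnWith (hf.comp_measurePreserving hX)
    (hX.integrable_comp_of_integrable hf4) (hX.measurable hA) hfA

end LipschitzPoincare

section Rotation

variable {E : Type*} [NormedAddCommGroup E] [NormedSpace ℝ E]

lemma rotation_rotation (δ θ : ℝ) (p : E × E) :
    rotation δ (rotation θ p) = rotation (θ + δ) p := by
  simp only [ContinuousLinearMap.rotation_apply, Real.cos_add, Real.sin_add, Prod.mk.injEq]
  constructor <;> module

lemma rotation_zero (p : E × E) : rotation 0 p = p := by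
  simp [ContinuousLinearMap.rotation_apply]

lemma rotation_pi_div_two_fst (p : E × E) : (rotation (π / 2) p).1 = p.2 := by
  simp [ContinuousLinearMap.rotation_apply]

lemma hasDerivAt_rotation_fst (p : E × E) :
    HasDerivAt (fun θ => (rotation θ p).1) p.2 0 := by
  simpa [ContinuousLinearMap.rotation_apply] using
    ((Real.hasDerivAt_cos 0).smul_const p.1).fun_add ((Real.hasDerivAt_sin 0).smul_const p.2)

lemma norm_rotation_fst_sub_le (θ : ℝ) (p : E × E) :
    ‖(rotation θ p).1 - p.1‖ ≤ |θ| * (‖p.1‖ + ‖p.2‖) := by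
  have hcos : ‖Real.cos θ - 1‖ ≤ |θ| := by simpa using Real.abs_cos_sub_cos_le θ 0
  have hsin : ‖Real.sin θ‖ ≤ |θ| := Real.abs_sin_le_abs
  calc ‖(rotation θ p).1 - p.1‖ = ‖(Real.cos θ - 1) • p.1 + Real.sin θ • p.2‖ := by
        rw [ContinuousLinearMap.rotation_apply]; congr 1; module
    _ ≤ ‖Real.cos θ - 1‖ * ‖p.1‖ + ‖Real.sin θ‖ * ‖p.2‖ := by
        simpa only [norm_smul] using norm_add_le ((Real.cos θ - 1) • p.1) (Real.sin θ • p.2)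
    _ ≤ |θ| * ‖p.1‖ + |θ| * ‖p.2‖ := by gcongr
    _ = |θ| * (‖p.1‖ + ‖p.2‖) := by ring

end Rotation

lemma integral_sq_sub_prod {Ω : Type*} [MeasurableSpace Ω] {μ : Measure Ω}
    [IsProbabilityMeasure μ] {h : Ω → ℝ} (hh : MemLp h 2 μ) :
    ∫ p, (h p.2 - h p.1) ^ 2 ∂(μ.prod μ) = 2 * Var[h; μ] := by
  have hsnd : MemLp (fun p : Ω × Ω => h p.2) 2 (μ.prod μ) := hh.comp_snd μ
  have hfst : MemLp (fun p : Ω × Ω => h p.1) 2 (μ.prod μ) := hh.comp_fst μ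
  have hmean : ∫ p, (h p.2 - h p.1) ∂(μ.prod μ) = 0 := by
    rw [integral_sub (hsnd.integrable one_le_two) (hfst.integrable one_le_two),
      integral_fun_snd, integral_fun_fst, sub_self]
  calc ∫ p, (h p.2 - h p.1) ^ 2 ∂(μ.prod μ) = Var[fun p => h p.2 - h p.1; μ.prod μ] :=
        (variance_of_integral_eq_zero (hsnd.sub hfst).aemeasurable hmean).symm
    _ = Var[fun p => (-h) p.1 + h p.2; μ.prod μ] := by simp [sub_eq_neg_add]
    _ = 2 * Var[h; μ] := by rw [variance_add_prod hh.neg hh, variance_neg, two_mul]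

section RotationInvariant

variable {E : Type*} [NormedAddCommGroup E] [NormedSpace ℝ E] [MeasurableSpace E]

/-- The law `μ ⊗ μ` of two independent copies is invariant under all rotations of `E × E`. It is
all that the quarter-turn argument below uses of a centered Gaussian measure. -/
def ProdRotationInvariant (μ : Measure E) : Prop :=
  ∀ θ : ℝ, MeasurePreserving (rotation θ) (μ.prod μ) (μ.prod μ)

variable {μ : Measure E} [IsProbabilityMeasure μ] {h : E → ℝ}

lemma ProdRotationInvariant.memLp_comp_rotation_fst (hμ : ProdRotationInvariant μ)
    (hh : MemLp h 2 μ) (θ : ℝ) : MemLp (fun p : E × E => h (rotation θ p).1) 2 (μ.prod μ) :=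
  (hh.comp_fst μ).comp_measurePreserving (hμ θ)

lemma ProdRotationInvariant.integral_sq_sub_rotation_add (hμ : ProdRotationInvariant μ)
    (hh : MemLp h 2 μ) (θ δ : ℝ) :
    ∫ p, (h (rotation (θ + δ) p).1 - h (rotation θ p).1) ^ 2 ∂(μ.prod μ) =
      ∫ p, (h (rotation δ p).1 - h p.1) ^ 2 ∂(μ.prod μ) := by
  have hmeas : AEStronglyMeasurable (fun p : E × E => (h (rotation δ p).1 - h p.1) ^ 2)
      ((μ.prod μ).map (rotation θ)) := by
    rw [(hμ θ).map_eq]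
    exact ((hμ.memLp_comp_rotation_fst hh δ).sub (hh.comp_fst μ)).aestronglyMeasurable.pow 2
  have hmap := integral_map (hμ θ).aemeasurable hmeas
  rw [(hμ θ).map_eq] at hmap
  simp only [hmap, rotation_rotation]

/-- A quarter turn, which exchanges the two copies, is cut into `n` steps of length `δ`: by
Cauchy–Schwarz the squared total increment is at most `n` times the sum of the squared steps, all of
which have the same mean. -/
lemma ProdRotationInvariant.two_mul_variance_le (hμ : ProdRotationInvariant μ)
    (hh : MemLp h 2 μ) {n : ℕ} {δ : ℝ} (hδ : n * δ = π / 2) :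
    2 * Var[h; μ] ≤ n ^ 2 * ∫ p, (h (rotation δ p).1 - h p.1) ^ 2 ∂(μ.prod μ) := by
  let step (k : ℕ) (p : E × E) : ℝ := h (rotation (k * δ + δ) p).1 - h (rotation (k * δ) p).1
  have hstep (k : ℕ) : Integrable (fun p => step k p ^ 2) (μ.prod μ) :=
    ((hμ.memLp_comp_rotation_fst hh _).sub (hμ.memLp_comp_rotation_fst hh _)).integrable_sq
  have htelescope (p : E × E) : h p.2 - h p.1 = ∑ k ∈ Finset.range n, step k p := by
    have hsum := Finset.sum_range_sub (fun k : ℕ => h (rotation (k * δ) p).1) n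
    simp only [Nat.cast_add, Nat.cast_one, add_one_mul, hδ, Nat.cast_zero, zero_mul, rotation_zero,
      rotation_pi_div_two_fst] at hsum
    exact hsum.symm
  have hcauchy (p : E × E) :
      (h p.2 - h p.1) ^ 2 ≤ n * ∑ k ∈ Finset.range n, step k p ^ 2 := by
    simpa [htelescope] using
      sq_sum_le_card_mul_sum_sq (s := Finset.range n) (f := fun k => step k p)
  calc 2 * Var[h; μ] = ∫ p, (h p.2 - h p.1) ^ 2 ∂(μ.prod μ) := (integral_sq_sub_prod hh).symm
    _ ≤ ∫ p, n * ∑ k ∈ Finset.range n, step k p ^ 2 ∂(μ.prod μ) :=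
        integral_mono ((hh.comp_snd μ).sub (hh.comp_fst μ)).integrable_sq
          ((integrable_finsetSum _ fun k _ => hstep k).const_mul _) hcauchy
    _ = n ^ 2 * ∫ p, (h (rotation δ p).1 - h p.1) ^ 2 ∂(μ.prod μ) := by
        rw [integral_const_mul, integral_finsetSum _ fun k _ => hstep k]
        simp only [step, hμ.integral_sq_sub_rotation_add hh, Finset.sum_const, Finset.card_range,
          nsmul_eq_mul]
        ring

end RotationInvariant

section Slope

variable {E : Type*} [NormedAddCommGroup E] [NormedSpace ℝ E] {h : E → ℝ} {K : ℝ≥0}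

lemma abs_slope_rotation_le (hh : LipschitzWith K h) (θ : ℝ) (p : E × E) :
    |θ⁻¹ * (h (rotation θ p).1 - h p.1)| ≤ K * (‖p.1‖ + ‖p.2‖) :=
  calc |θ⁻¹ * (h (rotation θ p).1 - h p.1)| = |θ|⁻¹ * |h (rotation θ p).1 - h p.1| := by
        rw [abs_mul, abs_inv]
    _ ≤ |θ|⁻¹ * (K * (|θ| * (‖p.1‖ + ‖p.2‖))) := by
        gcongr
        exact (hh.norm_sub_le _ _).trans (by gcongr; exact norm_rotation_fst_sub_le θ p)
    _ = |θ|⁻¹ * |θ| * (K * (‖p.1‖ + ‖p.2‖)) := by ring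
    _ ≤ K * (‖p.1‖ + ‖p.2‖) := mul_le_of_le_one_left (by positivity) inv_mul_le_one

lemma tendsto_slope_rotation {p : E × E} (hp : DifferentiableAt ℝ h p.1) :
    Tendsto (fun θ : ℝ => θ⁻¹ * (h (rotation θ p).1 - h p.1)) (𝓝[≠] 0)
      (𝓝 (fderiv ℝ h p.1 p.2)) := by
  have hderiv : HasDerivAt (fun θ => h (rotation θ p).1) (fderiv ℝ h p.1 p.2) 0 :=
    HasFDerivAt.comp_hasDerivAt (0 : ℝ) (by simpa [rotation_zero] using hp.hasFDerivAt)
      (hasDerivAt_rotation_fst p)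
  simpa [rotation_zero] using hderiv.tendsto_slope_zero

variable [MeasurableSpace E] [BorelSpace E] [SecondCountableTopology E] {μ : Measure E}
  [IsProbabilityMeasure μ]

lemma tendsto_integral_sq_slope_rotation (hμ : MemLp id 2 μ) (hh : LipschitzWith K h)
    (hd : ∀ᵐ x ∂μ, DifferentiableAt ℝ h x) :
    Tendsto (fun θ : ℝ => ∫ p, (θ⁻¹ * (h (rotation θ p).1 - h p.1)) ^ 2 ∂(μ.prod μ)) (𝓝[≠] 0)
      (𝓝 (∫ p, (fderiv ℝ h p.1 p.2) ^ 2 ∂(μ.prod μ))) := by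
  have hbound : Integrable (fun p : E × E => (K * (‖p.1‖ + ‖p.2‖)) ^ 2) (μ.prod μ) :=
    (((hμ.norm.comp_fst μ).add (hμ.norm.comp_snd μ)).const_mul (K : ℝ)).integrable_sq
  have hcont : Continuous h := hh.continuous
  refine tendsto_integral_filter_of_dominated_convergence _
    (.of_forall fun θ => Continuous.aestronglyMeasurable (by fun_prop))
    (.of_forall fun θ => .of_forall fun p => ?_) hbound ?_
  · rw [Real.norm_eq_abs, abs_pow]
    exact pow_le_pow_left₀ (abs_nonneg _) (abs_slope_rotation_le hh θ p) 2
  · filter_upwards [Measure.quasiMeasurePreserving_fst.ae hd] with p hp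
    exact (tendsto_slope_rotation hp).pow 2

theorem ProdRotationInvariant.variance_le_integral_sq_fderiv (hrot : ProdRotationInvariant μ)
    (hμ : MemLp id 2 μ) (hh : LipschitzWith K h) (hh2 : MemLp h 2 μ)
    (hd : ∀ᵐ x ∂μ, DifferentiableAt ℝ h x) :
    Var[h; μ] ≤ π ^ 2 / 8 * ∫ p, (fderiv ℝ h p.1 p.2) ^ 2 ∂(μ.prod μ) := by
  let δ (n : ℕ) : ℝ := π / 2 * (1 / (n + 1))
  have hδ_pos (n : ℕ) : 0 < δ n := by positivity
  have hδ_lim : Tendsto δ atTop (𝓝[≠] 0) := by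
    refine tendsto_nhdsWithin_iff.2 ⟨?_, .of_forall fun n => (hδ_pos n).ne'⟩
    simpa [δ] using tendsto_one_div_add_atTop_nhds_zero_nat.const_mul (π / 2)
  have hstep (n : ℕ) : 2 * Var[h; μ] ≤ (π / 2) ^ 2 *
      ∫ p, ((δ n)⁻¹ * (h (rotation (δ n) p).1 - h p.1)) ^ 2 ∂(μ.prod μ) := by
    have hn : ((n + 1 : ℕ) : ℝ) * δ n = π / 2 := by
      simp only [δ]
      push_cast
      field_simp
    refine (hrot.two_mul_variance_le hh2 hn).trans_eq ?_
    simp only [mul_pow, integral_const_mul, ← hn]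
    field_simp [(hδ_pos n).ne']
  have hlim := ((tendsto_integral_sq_slope_rotation hμ hh hd).comp hδ_lim).const_mul
    ((π / 2) ^ 2)
  linarith [ge_of_tendsto' hlim hstep]

end Slope

section AbsolutelyContinuous

lemma absolutelyContinuous_pi_fin {n : ℕ} {α : Fin n → Type*} [∀ i, MeasurableSpace (α i)]
    {μ ν : ∀ i, Measure (α i)} [∀ i, SigmaFinite (μ i)] [∀ i, SigmaFinite (ν i)]
    (h : ∀ i, μ i ≪ ν i) : Measure.pi μ ≪ Measure.pi ν := by
  induction n with
  | zero => rw [Measure.pi_of_empty μ, Measure.pi_of_empty ν]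
  | succ n ih =>
    rw [← (measurePreserving_piFinSuccAbove μ 0).symm.map_eq,
      ← (measurePreserving_piFinSuccAbove ν 0).symm.map_eq]
    exact ((h 0).prod (ih fun j => h _)).map (MeasurableEquiv.measurable _)

lemma absolutelyContinuous_pi {ι : Type*} [Fintype ι] {α : ι → Type*} [∀ i, MeasurableSpace (α i)]
    {μ ν : ∀ i, Measure (α i)} [∀ i, SigmaFinite (μ i)] [∀ i, SigmaFinite (ν i)]
    (h : ∀ i, μ i ≪ ν i) : Measure.pi μ ≪ Measure.pi ν := by
  let e := (Fintype.equivFin ι).symm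
  rw [← (measurePreserving_piCongrLeft μ e).map_eq, ← (measurePreserving_piCongrLeft ν e).map_eq]
  exact (absolutelyContinuous_pi_fin fun i => h (e i)).map (MeasurableEquiv.measurable _)

end AbsolutelyContinuous

section StdGaussian

variable (E : Type*) [NormedAddCommGroup E] [InnerProductSpace ℝ E] [FiniteDimensional ℝ E]
  [MeasurableSpace E] [BorelSpace E]

lemma stdGaussian_absolutelyContinuous : stdGaussian E ≪ volume := by
  let b := stdOrthonormalBasis ℝ E
  have hpi : (Measure.pi fun _ : Fin (Module.finrank ℝ E) => gaussianReal 0 1) ≪ volume :=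
    absolutelyContinuous_pi fun _ => gaussianReal_absolutelyContinuous 0 one_ne_zero
  have hb := b.measurePreserving_repr_symm.comp
    (PiLp.volume_preserving_toLp (Fin (Module.finrank ℝ E)))
  have hsum : (fun x : Fin (Module.finrank ℝ E) → ℝ => ∑ i, x i • b i) =
      b.repr.symm ∘ WithLp.toLp 2 := by
    ext x
    simp [← b.sum_repr_symm]
  rw [stdGaussian_eq_map_pi_orthonormalBasis b, hsum, ← hb.map_eq]
  exact hpi.map hb.measurable

lemma prodRotationInvariant_stdGaussian : ProdRotationInvariant (stdGaussian E) := fun θ =>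
  ⟨(rotation θ).continuous.measurable, IsGaussian.map_rotation_eq_self integral_id_stdGaussian θ⟩

variable {E}

lemma integral_sq_strongDual_stdGaussian (D : StrongDual ℝ E) :
    ∫ x, D x ^ 2 ∂(stdGaussian E) = ‖D‖ ^ 2 := by
  rw [← variance_dual_stdGaussian, variance_of_integral_eq_zero (by fun_prop)
    (integral_strongDual_stdGaussian D)]

lemma integral_sq_fderiv_stdGaussian_le {h : E → ℝ} {K : ℝ≥0} (hh : LipschitzWith K h) :
    ∫ p, (fderiv ℝ h p.1 p.2) ^ 2 ∂((stdGaussian E).prod (stdGaussian E)) ≤ K ^ 2 := by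
  have hfderiv (x : E) : ‖fderiv ℝ h x‖ ≤ K := norm_fderiv_le_of_lipschitz ℝ hh
  have hnorm : MemLp (fun p : E × E => K * ‖p.2‖) 2 ((stdGaussian E).prod (stdGaussian E)) :=
    ((IsGaussian.memLp_two_id (μ := stdGaussian E)).norm.comp_snd _).const_mul (K : ℝ)
  have hmeas : Measurable fun p : E × E => fderiv ℝ h p.1 p.2 :=
    isBoundedBilinearMap_apply.continuous.measurable.comp
      (((measurable_fderiv ℝ h).comp measurable_fst).prodMk measurable_snd)
  have hint : Integrable (fun p : E × E => (fderiv ℝ h p.1 p.2) ^ 2)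
      ((stdGaussian E).prod (stdGaussian E)) :=
    (hnorm.of_le hmeas.aestronglyMeasurable (.of_forall fun p => by
      simpa using (fderiv ℝ h p.1).le_of_opNorm_le (hfderiv p.1) p.2)).integrable_sq
  calc ∫ p, (fderiv ℝ h p.1 p.2) ^ 2 ∂((stdGaussian E).prod (stdGaussian E))
      = ∫ x, ‖fderiv ℝ h x‖ ^ 2 ∂(stdGaussian E) := by
        simp_rw [integral_prod _ hint, integral_sq_strongDual_stdGaussian]
    _ ≤ ∫ _, (K : ℝ) ^ 2 ∂(stdGaussian E) :=
        integral_mono_of_nonneg (.of_forall fun x => by positivity) (integrable_const _)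
          (.of_forall fun x => by dsimp only; gcongr; exact hfderiv x)
    _ = K ^ 2 := by simp

variable (E) in
theorem lipschitzPoincare_stdGaussian : LipschitzPoincare (stdGaussian E) (π ^ 2 / 8) := by
  intro K h hh hh2
  have hd : ∀ᵐ x ∂(stdGaussian E), DifferentiableAt ℝ h x :=
    (stdGaussian_absolutelyContinuous E).ae_le hh.ae_differentiableAt
  refine ((prodRotationInvariant_stdGaussian E).variance_le_integral_sq_fderiv
    IsGaussian.memLp_two_id hh hh2 hd).trans ?_
  gcongr
  exact integral_sq_fderiv_stdGaussian_le hh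

end StdGaussian

section ProductGaussian

variable {ι : Type*} [Fintype ι] (m : ι → ℝ) (σ : ι → ℝ≥0)

lemma map_pi_gaussianReal :
    (Measure.pi fun _ : ι => gaussianReal 0 1).map (fun x i => σ i * x i + m i) =
      Measure.pi fun i => gaussianReal (m i) (σ i ^ 2) := by
  have hcoord (i : ι) :
      (gaussianReal 0 1).map (fun t => σ i * t + m i) = gaussianReal (m i) (σ i ^ 2) := by
    have hcomp : (fun t : ℝ => σ i * t + m i) = (· + m i) ∘ (σ i * ·) := rfl
    rw [hcomp, ← Measure.map_map (by fun_prop) (by fun_prop), gaussianReal_map_const_mul,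
      gaussianReal_map_add_const]
    congr 1
    · simp
    · ext; simp
  simp_rw [← hcoord]
  exact Measure.pi_map_pi (f := fun i t => σ i * t + m i) fun i => by fun_prop

lemma map_toLp_pi_gaussianReal :
    (Measure.pi fun i => gaussianReal (m i) (σ i ^ 2)).map (WithLp.toLp 2) =
      (stdGaussian (EuclideanSpace ℝ ι)).map
        fun x => WithLp.toLp 2 fun i => σ i * x i + m i := by
  rw [← map_pi_gaussianReal, ← map_pi_eq_stdGaussian, Measure.map_map (by fun_prop) (by fun_prop),
    Measure.map_map (by fun_prop) (by fun_prop)]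
  rfl

lemma lipschitzWith_toLp_mul_add {σ : ι → ℝ≥0} {s : ℝ≥0} (hσ : ∀ i, σ i ≤ s) :
    LipschitzWith s fun x : EuclideanSpace ℝ ι =>
      (WithLp.toLp 2 fun i => σ i * x i + m i : EuclideanSpace ℝ ι) := by
  refine .of_dist_le_mul fun x y => ?_
  calc dist (WithLp.toLp 2 fun i => σ i * x i + m i : EuclideanSpace ℝ ι)
        (WithLp.toLp 2 fun i => σ i * y i + m i)
      = √(∑ i, (σ i * dist (x i) (y i)) ^ 2) := by
        simp [EuclideanSpace.dist_eq, Real.dist_eq, ← mul_sub, abs_mul]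
    _ ≤ √(∑ i, (s * dist (x i) (y i)) ^ 2) := by
        gcongr with i
        exact hσ i
    _ = s * dist x y := by
        simp_rw [mul_pow, ← Finset.mul_sum, EuclideanSpace.dist_eq]
        rw [Real.sqrt_mul (by positivity), Real.sqrt_sq s.coe_nonneg]

theorem lipschitzPoincare_map_toLp_pi_gaussianReal {σ : ι → ℝ≥0} {s : ℝ≥0} (hσ : ∀ i, σ i ≤ s) :
    LipschitzPoincare ((Measure.pi fun i => gaussianReal (m i) (σ i ^ 2)).map (WithLp.toLp 2))
      (π ^ 2 / 8 * s ^ 2) := by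
  rw [map_toLp_pi_gaussianReal]
  exact (lipschitzPoincare_stdGaussian (EuclideanSpace ℝ ι)).map
    (lipschitzWith_toLp_mul_add m hσ)

end ProductGaussian

lemma lipschitzOnWith_comp_ofLp {ι : Type*} [Fintype ι] {f : (ι → ℝ) → ℝ} {A : Set (ι → ℝ)} {L : ℝ}
    (hf : ∀ x ∈ A, ∀ y ∈ A, |f x - f y| ≤ L * √(∑ i, (x i - y i) ^ 2)) :
    LipschitzOnWith L.toNNReal (fun x : EuclideanSpace ℝ ι => f x.ofLp) (WithLp.ofLp ⁻¹' A) := by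
  refine .of_dist_le_mul fun x hx y hy => (hf _ hx _ hy).trans ?_
  rw [EuclideanSpace.dist_eq]
  simp_rw [Real.dist_eq, sq_abs]
  gcongr
  exact Real.le_coe_toNNReal L

theorem variance_lipschitz_on_high_prob_set_general {ι : Type*} [Fintype ι] {m : ι → ℝ}
    {σ : ι → ℝ≥0} {s : ℝ≥0} (hσ : ∀ i, σ i ≤ s) {μ : Measure (ι → ℝ)}
    (hμ : μ = Measure.pi fun i => gaussianReal (m i) (σ i ^ 2))
    {f : (ι → ℝ) → ℝ} (hf : AEStronglyMeasurable f μ) (hf4 : Integrable (fun x => f x ^ 4) μ)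
    {A : Set (ι → ℝ)} (hA : MeasurableSet A) {ε : ℝ} (hAε : 1 - ε ≤ μ.real A) {L : ℝ}
    (hfA : ∀ x ∈ A, ∀ y ∈ A, |f x - f y| ≤ L * √(∑ i, (x i - y i) ^ 2)) :
    Var[f; μ] ≤ 2 * s ^ 2 * L ^ 2 + 10 * √((∫ x, f x ^ 4 ∂μ) * ε) := by
  have : IsProbabilityMeasure μ := hμ ▸ inferInstance
  have hmap : IsProbabilityMeasure (μ.map (WithLp.toLp 2)) :=
    Measure.isProbabilityMeasure_map (by fun_prop)
  have hofLp : MeasurePreserving WithLp.ofLp (μ.map (WithLp.toLp 2)) μ :=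
    ((MeasurableEquiv.toLp 2 (ι → ℝ)).measurable.measurePreserving μ).symm _
  have hpoincare : LipschitzPoincare (μ.map (WithLp.toLp 2)) (π ^ 2 / 8 * s ^ 2) :=
    hμ ▸ lipschitzPoincare_map_toLp_pi_gaussianReal m hσ
  have : 0 ≤ ∫ x, f x ^ 4 ∂μ := integral_nonneg fun x => by positivity
  have hε : μ.real Aᶜ ≤ ε := by rw [probReal_compl_eq_one_sub hA]; linarith
  have hL : (L.toNNReal : ℝ) ^ 2 ≤ L ^ 2 := by
    rw [← sq_abs L]
    gcongr
    exact max_le (le_abs_self L) (abs_nonneg L)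
  have hpi : 3 / 2 * (π ^ 2 / 8) ≤ 2 := by nlinarith [Real.pi_pos, Real.pi_lt_d2]
  calc Var[f; μ]
      ≤ 3 / 2 * (π ^ 2 / 8 * s ^ 2 * L.toNNReal ^ 2) +
          10 * √((∫ x, f x ^ 4 ∂μ) * μ.real Aᶜ) :=
        hpoincare.variance_le_of_lipschitzOnWith_comp hofLp hf hf4 hA
          (lipschitzOnWith_comp_ofLp hfA)
    _ = 3 / 2 * (π ^ 2 / 8) * s ^ 2 * L.toNNReal ^ 2 +
          10 * √((∫ x, f x ^ 4 ∂μ) * μ.real Aᶜ) := by ring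
    _ ≤ 2 * s ^ 2 * L ^ 2 + 10 * √((∫ x, f x ^ 4 ∂μ) * ε) := by gcongr

/-- variance bound for a function that is Lipschitz on a set of
high Gaussian measure. If `G ~ N(0, σ²I_d)`, `f` is measurable, `f|_A` is
`L`-Lipschitz (Euclidean metric) with `P(G ∈ A) ≥ 1 - ε`, and `M = E f(G)⁴`,
then `Var f(G) ≤ 2σ²L² + 10√(Mε)`. -/
theorem variance_lipschitz_on_high_prob_set (d : ℕ) (σ : NNReal)
    (μ : Measure (Fin d → ℝ)) (hμ : μ = Measure.pi fun _ : Fin d => gaussianReal 0 (σ ^ 2))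
    (f : (Fin d → ℝ) → ℝ) (hf : Measurable f)
    (L ε M : ℝ) (hL : 0 ≤ L) (hε : 0 ≤ ε)
    (A : Set (Fin d → ℝ)) (hA : MeasurableSet A)
    (hAprob : 1 - ε ≤ (μ A).toReal)
    (hLip : ∀ x ∈ A, ∀ y ∈ A,
      |f x - f y| ≤ L * Real.sqrt (∑ i, (x i - y i) ^ 2))
    (hM : M = ∫ x, (f x) ^ 4 ∂μ)
    (hMint : Integrable (fun x => (f x) ^ 4) μ) :
    ∫ x, (f x - ∫ y, f y ∂μ) ^ 2 ∂μ
      ≤ 2 * (σ : ℝ) ^ 2 * L ^ 2 + 10 * Real.sqrt (M * ε) := by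
  rw [← variance_eq_integral hf.aemeasurable, hM]
  exact variance_lipschitz_on_high_prob_set_general (fun _ => le_rfl) hμ hf.aestronglyMeasurable
    hMint hA hAprob hLip
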